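/- Let p ∈ (1,2), δ ∈ (0, 1/4], and let u₁, u₂, v₁, v₂ ∈ ℝ with w_i := u_i - v_i. Writing D := (φ(u₁-u₂) - φ(v₁-v₂))(w₁-w₂) with φ(t) = |t|^{p-2}t (φ(0)=0), one has |w₁-w₂|^p ≤ 16 δ |u₁-u₂|^p + c(p) δ^{-(2-p)/p} D, for a constant c(p) depending only on p. -/

import Mathlib

/-!
The map `φ x = ‖x‖ ^ (p - 2) • x` is coercive:
`(p - 1) (‖a‖ + ‖b‖) ^ (p - 2) ‖a - b‖² ≤ ⟪φ a - φ b, a - b⟫`. Both sides split into a radial part,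
which depends on the norms only, and an angular part, a multiple of `‖a‖ ‖b‖ - ⟪a, b⟫ ≥ 0`. The
radial parts compare by weighted AM-GM, the angular ones because `t ^ (p - 2)` is decreasing.
Young's inequality with exponents `2 / p` and `2 / (2 - p)` trades the degenerate weight
`(‖a‖ + ‖b‖) ^ (p - 2)` for a small multiple of `(‖a‖ + ‖b‖) ^ p`, which is at most
`8 ‖a‖ ^ p + 2 ‖a - b‖ ^ p`; the last term is absorbed on the left.
-/

open scoped InnerProductSpace

section Scalar

variable {p x y : ℝ}

lemma rpow_sub_two_mul_self_le_tangent (hp1 : 1 ≤ p) (hp2 : p ≤ 2) (hx : 0 < x) (hy : 0 ≤ y) :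
    y ^ (p - 2) * y ≤ x ^ (p - 2) * ((2 - p) * x + (p - 1) * y) := by
  have amgm : x ^ (2 - p) * y ^ (p - 1) ≤ (2 - p) * x + (p - 1) * y :=
    Real.geom_mean_le_arith_mean2_weighted (by linarith) (by linarith) hx.le hy (by ring)
  have cancel : x ^ (p - 2) * x ^ (2 - p) = 1 := by
    rw [← Real.rpow_add hx, sub_add_sub_cancel, sub_self, Real.rpow_zero]
  calc y ^ (p - 2) * y ≤ y ^ (p - 1) := by
        rcases hy.eq_or_lt with rfl | hy
        · rw [mul_zero]
          positivity
        · rw [← Real.rpow_add_one hy.ne', show p - 2 + 1 = p - 1 by ring]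
    _ = x ^ (p - 2) * (x ^ (2 - p) * y ^ (p - 1)) := by rw [← mul_assoc, cancel, one_mul]
    _ ≤ x ^ (p - 2) * ((2 - p) * x + (p - 1) * y) := by gcongr

lemma rpow_sub_two_mul_sub_sq_le (hp1 : 1 ≤ p) (hp2 : p ≤ 2) (hx : 0 ≤ x) (hy : 0 ≤ y) :
    (p - 1) * (x + y) ^ (p - 2) * (x - y) ^ 2 ≤
      (x ^ (p - 2) * x - y ^ (p - 2) * y) * (x - y) := by
  wlog hyx : y ≤ x generalizing x y
  · have swapped := this hy hx (le_of_not_ge hyx)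
    rw [add_comm y x] at swapped
    linarith
  rcases hyx.eq_or_lt with rfl | hyx
  · simp
  have hx' : 0 < x := hy.trans_lt hyx
  have weight : (x + y) ^ (p - 2) ≤ x ^ (p - 2) :=
    Real.rpow_le_rpow_of_nonpos hx' (by linarith) (by linarith)
  have : 0 ≤ p - 1 := by linarith
  have hxy : 0 ≤ x - y := by linarith
  calc (p - 1) * (x + y) ^ (p - 2) * (x - y) ^ 2
      ≤ (p - 1) * x ^ (p - 2) * (x - y) ^ 2 := by gcongr
    _ = (x ^ (p - 2) * x - x ^ (p - 2) * ((2 - p) * x + (p - 1) * y)) * (x - y) := by ring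
    _ ≤ (x ^ (p - 2) * x - y ^ (p - 2) * y) * (x - y) := by
        have tangent := rpow_sub_two_mul_self_le_tangent hp1 hp2 hx' hy
        exact mul_le_mul_of_nonneg_right (by linarith) hxy

lemma rpow_le_weighted_sq_add_rpow {δ w s : ℝ} (hp0 : 0 < p) (hp2 : p ≤ 2) (hδ : 0 < δ)
    (hw : 0 ≤ w) (hs : 0 < s) :
    w ^ p ≤ p / 2 * (δ ^ (-(2 - p) / p) * (s ^ (p - 2) * w ^ 2)) + (2 - p) / 2 * (δ * s ^ p) := by
  have split : w ^ p =
      (δ ^ (-(2 - p) / p) * (s ^ (p - 2) * w ^ 2)) ^ (p / 2) * (δ * s ^ p) ^ ((2 - p) / 2) := by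
    have hδ_exp : δ ^ (-(2 - p) / p * (p / 2)) * δ ^ ((2 - p) / 2) = 1 := by
      rw [← Real.rpow_add hδ, ← Real.rpow_zero δ]
      congr 1
      field_simp
      ring
    have hs_exp : s ^ ((p - 2) * (p / 2)) * s ^ (p * ((2 - p) / 2)) = 1 := by
      rw [← Real.rpow_add hs, ← Real.rpow_zero s]
      ring_nf
    have hw_exp : (w ^ 2) ^ (p / 2) = w ^ p := by
      rw [← Real.rpow_natCast_mul hw, Nat.cast_ofNat, mul_div_cancel₀ p two_ne_zero]
    calc w ^ p = δ ^ (-(2 - p) / p * (p / 2)) * δ ^ ((2 - p) / 2) *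
          (s ^ ((p - 2) * (p / 2)) * s ^ (p * ((2 - p) / 2))) * w ^ p := by
          rw [hδ_exp, hs_exp, one_mul, one_mul]
      _ = (δ ^ (-(2 - p) / p) * (s ^ (p - 2) * w ^ 2)) ^ (p / 2) *
          (δ * s ^ p) ^ ((2 - p) / 2) := by
          rw [Real.mul_rpow (by positivity) (by positivity),
            Real.mul_rpow (by positivity) (by positivity), Real.mul_rpow hδ.le (by positivity),
            ← Real.rpow_mul hδ.le, ← Real.rpow_mul hs.le, ← Real.rpow_mul hs.le, hw_exp]
          ring
  rw [split]
  exact Real.geom_mean_le_arith_mean2_weighted (by linarith) (by linarith) (by positivity)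
    (by positivity) (by ring)

end Scalar

lemma norm_add_norm_rpow_le {E : Type*} [SeminormedAddCommGroup E] {p : ℝ} (hp1 : 1 ≤ p)
    (hp2 : p ≤ 2) (a b : E) :
    (‖a‖ + ‖b‖) ^ p ≤ 8 * ‖a‖ ^ p + 2 * ‖a - b‖ ^ p := by
  have triangle : ‖a‖ + ‖b‖ ≤ 2 * ‖a‖ + ‖a - b‖ := by
    linarith [norm_le_norm_add_norm_sub a b]
  have two_rpow_sub_one_le : (2 : ℝ) ^ (p - 1) ≤ 2 :=
    Real.rpow_le_self_of_one_le one_le_two (by linarith)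
  have two_rpow_le : (2 : ℝ) ^ p ≤ 4 := by
    calc (2 : ℝ) ^ p ≤ 2 ^ (2 : ℝ) := Real.rpow_le_rpow_of_exponent_le one_le_two hp2
      _ = 4 := by norm_num
  calc (‖a‖ + ‖b‖) ^ p ≤ (2 * ‖a‖ + ‖a - b‖) ^ p := by gcongr
    _ ≤ 2 ^ (p - 1) * ((2 * ‖a‖) ^ p + ‖a - b‖ ^ p) :=
        mod_cast NNReal.rpow_add_le_mul_rpow_add_rpow (2 * ‖a‖₊) ‖a - b‖₊ hp1
    _ = 2 ^ (p - 1) * (2 ^ p * ‖a‖ ^ p + ‖a - b‖ ^ p) := by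
        rw [Real.mul_rpow zero_le_two (norm_nonneg a)]
    _ ≤ 2 * (4 * ‖a‖ ^ p + ‖a - b‖ ^ p) := by gcongr
    _ = 8 * ‖a‖ ^ p + 2 * ‖a - b‖ ^ p := by ring

section InnerProductSpace

variable {E : Type*} [NormedAddCommGroup E] [InnerProductSpace ℝ E] {p δ : ℝ}

/-- The nonlinearity `φ` of the `p`-Laplacian, i.e. the gradient of `‖x‖ ^ p / p` for `1 < p`,
in a real inner product space; on `ℝ` it is `t ↦ |t| ^ (p - 2) * t`. The factor `x` makes the value
at `0` equal to `0` whatever `0 ^ (p - 2)` is. -/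
noncomputable def pFlux (p : ℝ) (x : E) : E := ‖x‖ ^ (p - 2) • x

lemma inner_pFlux_sub_pFlux (p : ℝ) (a b : E) :
    ⟪pFlux p a - pFlux p b, a - b⟫_ℝ =
      (‖a‖ ^ (p - 2) * ‖a‖ - ‖b‖ ^ (p - 2) * ‖b‖) * (‖a‖ - ‖b‖) +
        (‖a‖ ^ (p - 2) + ‖b‖ ^ (p - 2)) * (‖a‖ * ‖b‖ - ⟪a, b⟫_ℝ) := by
  simp only [pFlux, inner_sub_left, inner_sub_right, real_inner_smul_left,
    real_inner_self_eq_norm_sq, real_inner_comm a b]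
  ring

lemma norm_add_norm_rpow_mul_sub_inner_le (hp : p ≤ 2) (a b : E) :
    (‖a‖ + ‖b‖) ^ (p - 2) * (‖a‖ * ‖b‖ - ⟪a, b⟫_ℝ) ≤
      ‖a‖ ^ (p - 2) * (‖a‖ * ‖b‖ - ⟪a, b⟫_ℝ) := by
  rcases eq_or_ne a 0 with rfl | ha
  · simp
  · refine mul_le_mul_of_nonneg_right ?_ (sub_nonneg.2 (real_inner_le_norm a b))
    exact Real.rpow_le_rpow_of_nonpos (norm_pos_iff.2 ha) (by linarith [norm_nonneg b])
      (by linarith)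

lemma rpow_mul_norm_sub_sq_le_inner_pFlux_sub (hp1 : 1 ≤ p) (hp2 : p ≤ 2) (a b : E) :
    (p - 1) * (‖a‖ + ‖b‖) ^ (p - 2) * ‖a - b‖ ^ 2 ≤ ⟪pFlux p a - pFlux p b, a - b⟫_ℝ := by
  set s := (‖a‖ + ‖b‖) ^ (p - 2)
  set g := ‖a‖ * ‖b‖ - ⟪a, b⟫_ℝ with hg
  have norm_sq : ‖a - b‖ ^ 2 = (‖a‖ - ‖b‖) ^ 2 + 2 * g := by
    rw [norm_sub_sq_real, hg]
    ring
  have radial : (p - 1) * s * (‖a‖ - ‖b‖) ^ 2 ≤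
      (‖a‖ ^ (p - 2) * ‖a‖ - ‖b‖ ^ (p - 2) * ‖b‖) * (‖a‖ - ‖b‖) :=
    rpow_sub_two_mul_sub_sq_le hp1 hp2 (norm_nonneg a) (norm_nonneg b)
  have angular : (p - 1) * (s * g) ≤ s * g :=
    mul_le_of_le_one_left
      (mul_nonneg (by positivity) (sub_nonneg.2 (real_inner_le_norm a b))) (by linarith)
  have angular_left : s * g ≤ ‖a‖ ^ (p - 2) * g := norm_add_norm_rpow_mul_sub_inner_le hp2 a b
  have angular_right : s * g ≤ ‖b‖ ^ (p - 2) * g := by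
    simpa only [add_comm ‖b‖, mul_comm ‖b‖, real_inner_comm] using
      norm_add_norm_rpow_mul_sub_inner_le hp2 b a
  rw [norm_sq, inner_pFlux_sub_pFlux]
  linarith

lemma one_sub_mul_norm_sub_rpow_le (hp1 : 1 < p) (hp2 : p ≤ 2) (hδ : 0 < δ) (a b : E) :
    (1 - δ) * ‖a - b‖ ^ p ≤ 4 * δ * ‖a‖ ^ p +
      1 / (p - 1) * δ ^ (-(2 - p) / p) * ⟪pFlux p a - pFlux p b, a - b⟫_ℝ := by
  have hp : 0 < p - 1 := by linarith
  rcases eq_or_ne a b with rfl | hab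
  · simp only [sub_self, norm_zero, inner_zero_right, mul_zero, add_zero,
      Real.zero_rpow (by linarith : p ≠ 0)]
    positivity
  have hs : 0 < ‖a‖ + ‖b‖ := (norm_sub_pos_iff.2 hab).trans_le (norm_sub_le a b)
  have coercive : (‖a‖ + ‖b‖) ^ (p - 2) * ‖a - b‖ ^ 2 ≤
      1 / (p - 1) * ⟪pFlux p a - pFlux p b, a - b⟫_ℝ := by
    rw [one_div_mul_eq_div, le_div_iff₀' hp, ← mul_assoc]
    exact rpow_mul_norm_sub_sq_le_inner_pFlux_sub hp1.le hp2 a b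
  have young : ‖a - b‖ ^ p ≤
      δ ^ (-(2 - p) / p) * ((‖a‖ + ‖b‖) ^ (p - 2) * ‖a - b‖ ^ 2) +
        1 / 2 * (δ * (‖a‖ + ‖b‖) ^ p) := by
    refine (rpow_le_weighted_sq_add_rpow (by linarith) hp2 hδ (norm_nonneg _) hs).trans
      (add_le_add ?_ ?_)
    · exact mul_le_of_le_one_left (by positivity) (by linarith)
    · exact mul_le_mul_of_nonneg_right (by linarith) (by positivity)
  have absorb : ‖a - b‖ ^ p ≤
      δ ^ (-(2 - p) / p) * (1 / (p - 1) * ⟪pFlux p a - pFlux p b, a - b⟫_ℝ) +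
        1 / 2 * (δ * (8 * ‖a‖ ^ p + 2 * ‖a - b‖ ^ p)) := by
    refine young.trans ?_
    gcongr
    exact norm_add_norm_rpow_le hp1.le hp2 a b
  linarith

theorem stmt16_general (hp1 : 1 < p) (hp2 : p ≤ 2) (hδ : 0 < δ) (hδ' : δ ≤ 3 / 4)
    (u₁ u₂ v₁ v₂ : E) :
    ‖(u₁ - v₁) - (u₂ - v₂)‖ ^ p ≤ 16 * δ * ‖u₁ - u₂‖ ^ p +
      4 / (p - 1) * δ ^ (-(2 - p) / p) *
        ⟪pFlux p (u₁ - u₂) - pFlux p (v₁ - v₂), (u₁ - v₁) - (u₂ - v₂)⟫_ℝ := by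
  rw [sub_sub_sub_comm u₁ v₁ u₂ v₂]
  set w := (u₁ - u₂) - (v₁ - v₂)
  have absorbed : (1 - δ) * ‖w‖ ^ p ≤ 4 * δ * ‖u₁ - u₂‖ ^ p +
      1 / (p - 1) * δ ^ (-(2 - p) / p) * ⟪pFlux p (u₁ - u₂) - pFlux p (v₁ - v₂), w⟫_ℝ :=
    one_sub_mul_norm_sub_rpow_le hp1 hp2 hδ (u₁ - u₂) (v₁ - v₂)
  have quarter : 1 / 4 * ‖w‖ ^ p ≤ (1 - δ) * ‖w‖ ^ p := by
    gcongr
    linarith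
  linear_combination 4 * quarter + 4 * absorbed

end InnerProductSpace

/-- Pointwise inequality in the subquadratic case p ∈ (1,2): for δ ∈ (0,1/4], writing
w_i = u_i - v_i and D = (φ(u₁-u₂) - φ(v₁-v₂))(w₁-w₂) with φ(t) = |t|^{p-2}t,
one has |w₁-w₂|^p ≤ 16δ|u₁-u₂|^p + c(p) δ^{-(2-p)/p} D. -/
theorem stmt16 (p : ℝ) (hp1 : 1 < p) (hp2 : p < 2) :
    ∃ c : ℝ, 0 < c ∧ ∀ δ : ℝ, 0 < δ → δ ≤ 1 / 4 → ∀ u₁ u₂ v₁ v₂ : ℝ,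
      |(u₁ - v₁) - (u₂ - v₂)| ^ p ≤
        16 * δ * |u₁ - u₂| ^ p +
          c * δ ^ (-(2 - p) / p) *
            ((|u₁ - u₂| ^ (p - 2) * (u₁ - u₂) - |v₁ - v₂| ^ (p - 2) * (v₁ - v₂)) *
              ((u₁ - v₁) - (u₂ - v₂))) := by
  refine ⟨4 / (p - 1), div_pos four_pos (by linarith), fun δ hδ hδ' u₁ u₂ v₁ v₂ => ?_⟩
  simpa only [pFlux, Real.norm_eq_abs, smul_eq_mul, Real.inner_apply] using
    stmt16_general hp1 hp2.le hδ (hδ'.trans (by norm_num)) u₁ u₂ v₁ v₂
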